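/- arXiv:1404.2858 — 2 statements merged into one kernel-verified Lean document; each statement's English description precedes it below -/
import Mathlib

section
/- Identify 𝒫(ℕ) with the Cantor space 2^ℕ with the product topology via characteristic functions. Let 𝒦 be a nonempty family of compact subsets of 𝒫(ℕ) and suppose that ⋃𝒦 generates a (proper) filter 𝒢 on ℕ, i.e., 𝒢 = { A ⊆ ℕ | A ⊇ G₀ ∩ … ∩ G_{k−1} for some finitely many G₀, …, G_{k−1} ∈ ⋃𝒦 }. Then there is a family 𝒦′ of compact subsets of 𝒫(ℕ), of cardinality at most max(|𝒦|, ℵ₀), each of whose members is upward closed under ⊆ and contained in 𝒢, such that 𝒢 = ⋃𝒦′. -/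
/-- The characteristic function identification of `𝒫(ℕ)` with Cantor space `ℕ → Bool`. -/
noncomputable def chi (A : Set ℕ) : ℕ → Bool :=
  fun n => @decide (n ∈ A) (Classical.dec _)

/-- Upward closed set generated by intersections along a list. -/
def upL (𝒦 : Set (Set (Set ℕ))) : List 𝒦 → Set (Set ℕ)
  | [] => {Set.univ}
  | K :: l => {A | ∃ B ∈ K.1, ∃ C ∈ upL 𝒦 l, B ∩ C ⊆ A}

theorem upL_up (𝒦 : Set (Set (Set ℕ))) (l : List 𝒦) :
    ∀ A ∈ upL 𝒦 l, ∀ B : Set ℕ, A ⊆ B → B ∈ upL 𝒦 l := by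
  intro A hA B hAB
  cases l with
  | nil =>
    simp only [upL, Set.mem_singleton_iff] at hA ⊢
    subst hA
    exact Set.univ_subset_iff.mp hAB
  | cons K l =>
    obtain ⟨D, hD, C, hC, h⟩ := hA
    exact ⟨D, hD, C, hC, h.trans hAB⟩

theorem upL_compact (𝒦 : Set (Set (Set ℕ))) (hcomp : ∀ K ∈ 𝒦, IsCompact (chi '' K))
    (l : List 𝒦) : IsCompact (chi '' upL 𝒦 l) := by
  induction l with
  | nil => simp [upL]
  | cons K l ih =>
    have hc : Continuous (fun p : (ℕ → Bool) × (ℕ → Bool) × (ℕ → Bool) =>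
        (fun n => (p.1 n && p.2.1 n) || p.2.2 n)) := by
      refine continuous_pi fun n => ?_
      have h : Continuous (fun q : Bool × Bool × Bool => (q.1 && q.2.1) || q.2.2) :=
        continuous_of_discreteTopology
      have h2 : Continuous (fun p : (ℕ → Bool) × (ℕ → Bool) × (ℕ → Bool) =>
        (p.1 n, p.2.1 n, p.2.2 n)) := by fun_prop
      exact h.comp h2
    have := (((hcomp K.1 K.2).prod (ih.prod (isCompact_univ (X := ℕ → Bool))))).image hc
    convert this using 1
    ext x
    constructor
    · rintro ⟨A, ⟨B, hB, C, hC, h⟩, rfl⟩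
      refine ⟨(chi B, chi C, chi A), ⟨⟨B, hB, rfl⟩, ⟨C, hC, rfl⟩, trivial⟩, ?_⟩
      funext n
      have := @h n
      by_cases h1 : n ∈ A <;> by_cases h2 : n ∈ B <;> by_cases h3 : n ∈ C <;>
        simp_all [chi]
    · rintro ⟨⟨b, c, d⟩, ⟨⟨B, hB, rfl⟩, ⟨C, hC, rfl⟩, -⟩, rfl⟩
      refine ⟨(B ∩ C) ∪ {n | d n = true}, ⟨B, hB, C, hC, Set.subset_union_left⟩, ?_⟩
      funext n
      by_cases h2 : n ∈ B <;> by_cases h3 : n ∈ C <;> simp_all [chi]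

/-- If a nonempty family `𝒦` of compact subsets of `𝒫(ℕ)` is such that `⋃𝒦` generates
a proper filter `𝒢`, then `𝒢` is the union of a family `𝒦'` of at most `max(|𝒦|, ℵ₀)` many
compact, upward closed subsets of `𝒢`. -/
theorem exists_upwardClosed_compact_generating_family
    (𝒦 : Set (Set (Set ℕ))) (hne : 𝒦.Nonempty)
    (hcomp : ∀ K ∈ 𝒦, IsCompact (chi '' K))
    (𝒢 : Set (Set ℕ))
    (h𝒢 : 𝒢 = {A : Set ℕ |
      ∃ s : Finset (Set ℕ), ↑s ⊆ ⋃₀ 𝒦 ∧ ⋂₀ (s : Set (Set ℕ)) ⊆ A})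
    (hproper : ∅ ∉ 𝒢) :
    ∃ 𝒦' : Set (Set (Set ℕ)),
      Cardinal.mk 𝒦' ≤ max (Cardinal.mk 𝒦) Cardinal.aleph0 ∧
      (∀ K ∈ 𝒦', IsCompact (chi '' K)) ∧
      (∀ K ∈ 𝒦', ∀ A ∈ K, ∀ B : Set ℕ, A ⊆ B → B ∈ K) ∧
      (∀ K ∈ 𝒦', K ⊆ 𝒢) ∧
      𝒢 = ⋃₀ 𝒦' := by
  classical
  have key : ∀ l, upL 𝒦 l ⊆ 𝒢 := by
    intro l
    rw [h𝒢]
    induction l with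
    | nil =>
      rintro A rfl
      exact ⟨∅, by simp, by simp⟩
    | cons K l ih =>
      rintro A ⟨B, hB, C, hC, h⟩
      obtain ⟨s, hs, hsC⟩ := ih hC
      refine ⟨insert B s, ?_, ?_⟩
      · rw [Finset.coe_insert, Set.insert_subset_iff]
        exact ⟨⟨K.1, K.2, hB⟩, hs⟩
      · rw [Finset.coe_insert, Set.sInter_insert]
        exact (Set.inter_subset_inter_right _ hsC).trans h
  refine ⟨Set.range (upL 𝒦), ?_, ?_, ?_, ?_, ?_⟩
  · refine Cardinal.mk_range_le.trans ?_
    rw [max_comm]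
    exact Cardinal.mk_list_le_max _
  · rintro _ ⟨l, rfl⟩
    exact upL_compact 𝒦 hcomp l
  · rintro _ ⟨l, rfl⟩
    exact upL_up 𝒦 l
  · rintro _ ⟨l, rfl⟩
    exact key l
  · apply Set.Subset.antisymm
    · intro A hA
      rw [h𝒢] at hA
      obtain ⟨s, hs, hA⟩ := hA
      suffices h : ∃ l, ⋂₀ (s : Set (Set ℕ)) ∈ upL 𝒦 l by
        obtain ⟨l, hl⟩ := h
        exact ⟨_, ⟨l, rfl⟩, upL_up 𝒦 l _ hl _ hA⟩
      clear hA
      induction s using Finset.induction_on with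
      | empty => exact ⟨[], by simp [upL]⟩
      | insert a s _ ih =>
        rw [Finset.coe_insert, Set.insert_subset_iff] at hs
        obtain ⟨l, hl⟩ := ih hs.2
        obtain ⟨K, hK, haK⟩ := hs.1
        refine ⟨⟨K, hK⟩ :: l, a, haK, _, hl, ?_⟩
        rw [Finset.coe_insert, Set.sInter_insert]
    · rintro A ⟨_, ⟨l, rfl⟩, hA⟩
      exact key l hA
end

section
/- Identify 𝒫(ℕ) with the Cantor space 2^ℕ with the product topology via characteristic functions. Let τ be a partial function from (finite subsets of ℕ) × ℕ to ℕ, and for a finite subset t ⊆ ℕ, G ⊆ ℕ, and m ∈ ℕ define g_{t,G}(m) ∈ ℕ ∪ {∞} as the minimum of { τ(s,m) | s a finite subset of ℕ strictly end-extending t with s ∖ t ⊆ G and (s,m) ∈ dom(τ) }, or ∞ if this set is empty. Then for every f : ℕ → ℕ, the set ℋ = { H ⊆ ℕ | there is a finite t ⊆ ℕ such that g_{t, ℕ∖H}(m) ≥ f(m) for all but finitely many m } is the union of countably many compact subsets of 𝒫(ℕ) (i.e., ℋ is σ-compact). -/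
/-- `s` strictly end-extends `t`: `t ⊆ s`, `s ≠ t`, and every new element is above all of `t`. -/
def StrictEndExt (t s : Finset ℕ) : Prop :=
  t ⊆ s ∧ s ≠ t ∧ ∀ a ∈ s, a ∉ t → ∀ b ∈ t, b < a

/-- `gFn τ t G m` is the minimum of the values `τ(s, m)` over finite sets `s` strictly
end-extending `t` with `s \ t ⊆ G` and `(s, m)` in the domain of `τ`; it is `⊤ = ∞` if
there is no such `s`. -/
noncomputable def gFn (τ : Finset ℕ × ℕ → Option ℕ) (t : Finset ℕ) (G : Set ℕ) (m : ℕ) :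
    ℕ∞ :=
  sInf {x : ℕ∞ | ∃ (s : Finset ℕ) (v : ℕ), StrictEndExt t s ∧
    (∀ a ∈ s, a ∉ t → a ∈ G) ∧ τ (s, m) = some v ∧ x = (v : ℕ∞)}

/-- The set `ℋ = {H | ∃ t, g_{t, ℕ∖H} ≥* f}` is σ-compact: a countable union of compact
subsets of `𝒫(ℕ)`. -/
theorem isSigmaCompact_H (τ : Finset ℕ × ℕ → Option ℕ) (f : ℕ → ℕ) :
    ∃ C : ℕ → Set (Set ℕ), (∀ n : ℕ, IsCompact (chi '' C n)) ∧
      {H : Set ℕ | ∃ t : Finset ℕ, ∃ m₀ : ℕ, ∀ m : ℕ, m₀ ≤ m →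
        (f m : ℕ∞) ≤ gFn τ t Hᶜ m} = ⋃ n : ℕ, C n := by
  obtain ⟨e, he⟩ := exists_surjective_nat (Finset ℕ × ℕ)
  refine ⟨fun n => {H | ∀ m : ℕ, (e n).2 ≤ m → (f m : ℕ∞) ≤ gFn τ (e n).1 Hᶜ m}, ?_, ?_⟩
  · intro n
    beta_reduce
    generalize e n = p
    obtain ⟨t, m₀⟩ := p
    apply IsClosed.isCompact
    have key : chi '' {H | ∀ m : ℕ, m₀ ≤ m → (f m : ℕ∞) ≤ gFn τ t Hᶜ m} =
        {x : ℕ → Bool | ∀ (m : ℕ) (s : Finset ℕ) (v : ℕ), m₀ ≤ m → StrictEndExt t s →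
          τ (s, m) = some v → ¬ f m ≤ v → ¬ ∀ a ∈ s, a ∉ t → x a = false} := by
      ext x
      constructor
      · rintro ⟨H, hH, rfl⟩ m s v hm hs hv hf hx
        have h := hH m hm
        apply hf
        have h2 : gFn τ t Hᶜ m ≤ (v : ℕ∞) :=
          sInf_le ⟨s, v, hs, fun a ha hat => by simpa [chi] using hx a ha hat, hv, rfl⟩
        exact_mod_cast h.trans h2
      · intro hx
        refine ⟨{a | x a = true}, ?_, ?_⟩
        · intro m hm
          apply le_sInf
          rintro _ ⟨s, v, hs, hG, hv, rfl⟩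
          by_contra hf
          exact hx m s v hm hs hv (fun h => hf (by exact_mod_cast h))
            (fun a ha hat => by simpa using hG a ha hat)
        · funext a
          simp [chi]
    show IsClosed (chi '' {H | ∀ m : ℕ, m₀ ≤ m → (f m : ℕ∞) ≤ gFn τ t Hᶜ m})
    rw [key]
    simp only [Set.setOf_forall]
    refine isClosed_iInter fun m => isClosed_iInter fun s => isClosed_iInter fun v =>
      isClosed_iInter fun _ => isClosed_iInter fun _ => isClosed_iInter fun _ =>
      isClosed_iInter fun _ => ?_
    rw [← isOpen_compl_iff]
    have : {x : ℕ → Bool | ¬ ∀ a ∈ s, a ∉ t → x a = false}ᶜ =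
        ⋂ a ∈ s, {x : ℕ → Bool | a ∉ t → x a = false} := by
      ext x; simp
    rw [this]
    refine isOpen_biInter_finset fun a _ => ?_
    by_cases hat : a ∈ t
    · simp [hat]
    · simp only [hat, not_false_eq_true, forall_const]
      have h : Continuous (fun x : ℕ → Bool => x a) := continuous_apply a
      exact (isOpen_discrete ({false} : Set Bool)).preimage h
  · ext H
    simp only [Set.mem_setOf_eq, Set.mem_iUnion]
    constructor
    · rintro ⟨t, m₀, h⟩
      obtain ⟨n, hn⟩ := he (t, m₀)
      exact ⟨n, by rw [hn]; exact h⟩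
    · rintro ⟨n, h⟩
      exact ⟨_, _, h⟩
end
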